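/- (Theorem 2) Define, for ρ > 0, I_XY(ρ) = log( ρ · √(1 + ρ⁻¹) ) + ρ⁻¹ · log √(1 + ρ) − ρ + ρ⁻¹ · √(1 + ρ⁻¹) · F(ρ) + ψ(ρ⁻¹) − ψ(1) − 1, where F(ρ) = ∫₀^∞ ξ · K₁(√(1 + ρ⁻¹) · ξ) · I₁(ξ) · log I₁(ξ) dξ. Then lim_{ρ → ∞} ( (1/2) · log ρ ) / I_XY(ρ) = 1; that is, the mutual information is asymptotically equivalent to (1/2) log ρ as ρ → ∞. -/

import Mathlib

open Real MeasureTheory Set Filter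

/-- Modified Bessel function of the first kind of order one,
`I₁(z) = ∑_{k=0}^∞ (z/2)^(2k+1) / (k! (k+1)!)`. -/
noncomputable def besselI1 (z : ℝ) : ℝ :=
  ∑' k : ℕ, (z / 2) ^ (2 * k + 1) / ((Nat.factorial k : ℝ) * (Nat.factorial (k + 1) : ℝ))

/-- Modified Bessel function of the second kind of order one,
`K₁(z) = ∫₀^∞ exp (−z cosh t) cosh t dt`. -/
noncomputable def besselK1 (z : ℝ) : ℝ :=
  ∫ t in Ioi (0 : ℝ), Real.exp (-z * Real.cosh t) * Real.cosh t

/-- Digamma function `ψ(x) = d/dx log Γ(x)`. -/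
noncomputable def digamma (x : ℝ) : ℝ :=
  deriv (fun y : ℝ => Real.log (Real.Gamma y)) x

/-- Conditional output density of the noncentral chi channel with four degrees of freedom. -/
noncomputable def condDensity (σN x y : ℝ) : ℝ :=
  (2 / σN ^ 2) * (y ^ 2 / x) * Real.exp (-(x ^ 2 + y ^ 2) / σN ^ 2) *
    besselI1 (2 * x * y / σN ^ 2)

/-- Rayleigh input density with mean-square `σS²`. -/
noncomputable def rayleighDensity (σS x : ℝ) : ℝ :=
  (2 * x / σS ^ 2) * Real.exp (-x ^ 2 / σS ^ 2)

/-- `F(ρ) = ∫₀^∞ ξ K₁(√(1+ρ⁻¹) ξ) I₁(ξ) log I₁(ξ) dξ`. -/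
noncomputable def Fint (ρ : ℝ) : ℝ :=
  ∫ ξ in Ioi (0 : ℝ),
    ξ * besselK1 (Real.sqrt (1 + ρ⁻¹) * ξ) * besselI1 ξ * Real.log (besselI1 ξ)

/-- Closed-form mutual information of Theorem 1. -/
noncomputable def Ixy (ρ : ℝ) : ℝ :=
  Real.log (ρ * Real.sqrt (1 + ρ⁻¹)) + ρ⁻¹ * Real.log (Real.sqrt (1 + ρ)) - ρ +
    ρ⁻¹ * Real.sqrt (1 + ρ⁻¹) * Fint ρ + digamma ρ⁻¹ - digamma 1 - 1

/-!
Substituting `u = 1 - cos θ` in Poisson's integral for `I₁` and `u = cosh t - 1` in the integral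
for `K₁` turns `exp (-z) * I₁ z` and `exp z * K₁ z` into Laplace transforms. Bounding the amplitudes
by their first-order expansions at `u = 0` (Watson's lemma with explicit errors) shows that both
functions differ from their leading asymptotic terms by relative errors `O(1/z)`.

With `a = √(1 + ρ⁻¹)` and `ε = a - 1`, the integrand of `F(ρ)` is therefore
`(2 √a)⁻¹ exp (-ε ξ) (ξ - log ξ / 2 + O(1 + ξ ^ (-1/2)))` uniformly in `ξ > 0`. Integrating gives
`F(ρ) = (2 √a)⁻¹ (ε⁻² + ε⁻¹ log ε / 2) + O(ε⁻¹)`. Since `ε (a + 1) = ρ⁻¹`, this contributes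
`2 ρ - log ρ / 2 + O(1)` to `I_XY(ρ)`. The terms `log ρ` and `-ρ`, and `ψ(ρ⁻¹) = -ρ + O(1)`,
leave `I_XY(ρ) = log ρ / 2 + O(1)`.
-/

/-! ### Poisson's integral for `I₁` -/

lemma hasSum_integral_exp_mul {f w : ℝ → ℝ} (hf : Continuous f) (hw : Continuous w) (a b z : ℝ) :
    HasSum (fun n : ℕ => z ^ n / n.factorial * ∫ θ in a..b, f θ ^ n * w θ)
      (∫ θ in a..b, exp (z * f θ) * w θ) := by
  have hexp (x : ℝ) : HasSum (fun n : ℕ => x ^ n / n.factorial) (exp x) := by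
    simpa only [Real.exp_eq_exp_ℝ] using NormedSpace.expSeries_div_hasSum_exp x
  simp_rw [← intervalIntegral.integral_const_mul]
  refine intervalIntegral.hasSum_integral_of_dominated_convergence
    (fun n θ => |z * f θ| ^ n / n.factorial * |w θ|) (fun n => ?_) (fun n => ?_) ?_ ?_ ?_
  · exact (by fun_prop : Continuous _).aestronglyMeasurable
  · refine Eventually.of_forall fun θ _ => le_of_eq ?_
    rw [Real.norm_eq_abs, ← mul_assoc, abs_mul, div_mul_eq_mul_div, ← mul_pow, abs_div, abs_pow,
      Nat.abs_cast]
  · exact Eventually.of_forall fun θ _ => (hexp _).summable.mul_right _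
  · simp_rw [((hexp _).mul_right _).tsum_eq]
    exact (by fun_prop : Continuous _).intervalIntegrable _ _
  · refine Eventually.of_forall fun θ _ => ((hexp (z * f θ)).mul_right (w θ)).congr_fun ?_
    intro n
    ring

lemma integral_cos_pow_odd (k : ℕ) : ∫ θ in (0 : ℝ)..π, cos θ ^ (2 * k + 1) = 0 := by
  induction k with
  | zero => simp
  | succ k ih =>
    rw [show 2 * (k + 1) + 1 = (2 * k + 1) + 2 by ring, integral_cos_pow, ih]
    simp

lemma integral_cos_pow_even (k : ℕ) :
    ∫ θ in (0 : ℝ)..π, cos θ ^ (2 * k) =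
      π * (2 * k).factorial / (2 ^ (2 * k) * (k.factorial : ℝ) ^ 2) := by
  induction k with
  | zero => simp
  | succ k ih =>
    rw [show 2 * (k + 1) = 2 * k + 2 by ring, integral_cos_pow, ih]
    simp only [Nat.factorial_succ, sin_pi, sin_zero]
    push_cast
    field_simp
    ring

lemma integral_cos_pow_mul_sin_sq (n : ℕ) :
    ∫ θ in (0 : ℝ)..π, cos θ ^ n * sin θ ^ 2 = (∫ θ in (0 : ℝ)..π, cos θ ^ n) / (n + 2) := by
  have hint (m : ℕ) : IntervalIntegrable (fun θ => cos θ ^ m) volume 0 π :=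
    (by fun_prop : Continuous _).intervalIntegrable _ _
  calc ∫ θ in (0 : ℝ)..π, cos θ ^ n * sin θ ^ 2
      = ∫ θ in (0 : ℝ)..π, (cos θ ^ n - cos θ ^ (n + 2)) := by
        congr with θ
        rw [sin_sq]
        ring
    _ = (∫ θ in (0 : ℝ)..π, cos θ ^ n) / (n + 2) := by
        rw [intervalIntegral.integral_sub (hint _) (hint _), integral_cos_pow, sin_pi, sin_zero]
        field_simp
        ring

lemma hasSum_besselI1 (z : ℝ) :
    HasSum (fun k : ℕ =>
        (z / 2) ^ (2 * k + 1) / ((Nat.factorial k : ℝ) * (Nat.factorial (k + 1) : ℝ)))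
      (z / π * ∫ θ in (0 : ℝ)..π, exp (z * cos θ) * sin θ ^ 2) := by
  have hmoments := hasSum_integral_exp_mul continuous_cos (continuous_sin.pow 2) 0 π z
  have hinj : Function.Injective fun k : ℕ => 2 * k := mul_right_injective₀ two_ne_zero
  rw [← hinj.hasSum_iff] at hmoments
  · refine (hmoments.mul_left (z / π)).congr_fun fun k => ?_
    simp only [Function.comp_apply, Pi.pow_apply]
    rw [integral_cos_pow_mul_sin_sq, integral_cos_pow_even, Nat.factorial_succ, div_pow]
    push_cast
    field_simp
    ring
  · intro n hn
    obtain ⟨k, rfl | rfl⟩ := n.even_or_odd'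
    · exact absurd ⟨k, rfl⟩ hn
    · simp only [Pi.pow_apply]
      rw [integral_cos_pow_mul_sin_sq, integral_cos_pow_odd, zero_div, mul_zero]

lemma besselI1_eq_integral (z : ℝ) :
    besselI1 z = z / π * ∫ θ in (0 : ℝ)..π, exp (z * cos θ) * sin θ ^ 2 :=
  (hasSum_besselI1 z).tsum_eq

lemma continuous_besselI1 : Continuous besselI1 := by
  simp_rw [funext besselI1_eq_integral]
  have := intervalIntegral.continuous_parametric_intervalIntegral_of_continuous' (μ := volume)
    (f := fun z θ => exp (z * cos θ) * sin θ ^ 2) (by fun_prop) 0 π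
  fun_prop

lemma half_le_besselI1 {z : ℝ} (hz : 0 ≤ z) : z / 2 ≤ besselI1 z := by
  rw [besselI1_eq_integral]
  simpa using le_hasSum (hasSum_besselI1 z) 0 fun k _ => by positivity

lemma besselI1_pos {z : ℝ} (hz : 0 < z) : 0 < besselI1 z :=
  (half_pos hz).trans_le (half_le_besselI1 hz.le)

lemma besselI1_le_half_mul_exp {z : ℝ} (hz : 0 ≤ z) : besselI1 z ≤ z / 2 * exp z := by
  calc besselI1 z = z / π * ∫ θ in (0 : ℝ)..π, exp (z * cos θ) * sin θ ^ 2 :=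
        besselI1_eq_integral z
    _ ≤ z / π * ∫ θ in (0 : ℝ)..π, exp z * sin θ ^ 2 := by
        gcongr
        refine intervalIntegral.integral_mono_on pi_pos.le
          ((by fun_prop : Continuous _).intervalIntegrable _ _)
          ((by fun_prop : Continuous _).intervalIntegrable _ _) fun θ _ => ?_
        gcongr
        exact mul_le_of_le_one_right hz (cos_le_one θ)
    _ = z / 2 * exp z := by
        rw [intervalIntegral.integral_const_mul, integral_sin_sq]
        simp only [sin_zero, sin_pi]
        field_simp
        ring

/-! ### Laplace transforms of `u ^ (s - 1) * (1 + c * u)` -/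

lemma integrableOn_rpow_mul_exp_neg_mul {s z : ℝ} (hs : 0 < s) (hz : 0 < z) :
    IntegrableOn (fun u : ℝ => u ^ (s - 1) * exp (-(z * u))) (Ioi 0) := by
  simpa using integrableOn_rpow_mul_exp_neg_mul_rpow (by linarith : -1 < s - 1) one_pos hz

lemma rpow_mul_exp_mul_one_add_eqOn (s z c : ℝ) :
    EqOn (fun u => u ^ (s - 1) * exp (-(z * u)) * (1 + c * u))
      (fun u => u ^ (s - 1) * exp (-(z * u)) + c * (u ^ (s + 1 - 1) * exp (-(z * u)))) (Ioi 0) := by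
  intro u hu
  have hpow : u ^ (s + 1 - 1) = u ^ (s - 1) * u := by
    rw [← rpow_add_one (mem_Ioi.1 hu).ne']
    ring_nf
  simp only [hpow]
  ring

lemma integrableOn_rpow_mul_exp_mul_one_add {s z : ℝ} (hs : 0 < s) (hz : 0 < z) (c : ℝ) :
    IntegrableOn (fun u : ℝ => u ^ (s - 1) * exp (-(z * u)) * (1 + c * u)) (Ioi 0) :=
  ((integrableOn_rpow_mul_exp_neg_mul hs hz).add
    ((integrableOn_rpow_mul_exp_neg_mul (by positivity) hz).const_mul c)).congr_fun
      (rpow_mul_exp_mul_one_add_eqOn s z c).symm measurableSet_Ioi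

lemma integral_rpow_mul_exp_mul_one_add {s z : ℝ} (hs : 0 < s) (hz : 0 < z) (c : ℝ) :
    ∫ u in Ioi (0 : ℝ), u ^ (s - 1) * exp (-(z * u)) * (1 + c * u) =
      (1 / z) ^ s * Gamma s * (1 + c * s / z) := by
  have hz' : 0 < 1 / z := by positivity
  rw [setIntegral_congr_fun measurableSet_Ioi (rpow_mul_exp_mul_one_add_eqOn s z c),
    integral_add (integrableOn_rpow_mul_exp_neg_mul hs hz)
      ((integrableOn_rpow_mul_exp_neg_mul (by positivity) hz).const_mul c),
    integral_const_mul, integral_rpow_mul_exp_neg_mul_Ioi hs hz,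
    integral_rpow_mul_exp_neg_mul_Ioi (by positivity) hz, Gamma_add_one hs.ne',
    rpow_add_one hz'.ne']
  ring

lemma integrableOn_sqrt_mul_exp_mul_one_add {z : ℝ} (hz : 0 < z) (c : ℝ) :
    IntegrableOn (fun u => √u * exp (-(z * u)) * (1 + c * u)) (Ioi 0) := by
  have h := integrableOn_rpow_mul_exp_mul_one_add (s := 3 / 2) (by norm_num) hz c
  rw [show (3 / 2 : ℝ) - 1 = 1 / 2 by norm_num] at h
  simpa only [← sqrt_eq_rpow] using h

lemma integral_sqrt_mul_exp_mul_one_add {z : ℝ} (hz : 0 < z) (c : ℝ) :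
    ∫ u in Ioi (0 : ℝ), √u * exp (-(z * u)) * (1 + c * u) =
      √π / (2 * z * √z) * (1 + c * (3 / 2) / z) := by
  have h := integral_rpow_mul_exp_mul_one_add (s := 3 / 2) (by norm_num) hz c
  rw [show (3 / 2 : ℝ) - 1 = 1 / 2 by norm_num] at h
  simp only [← sqrt_eq_rpow] at h
  rw [h, show (3 / 2 : ℝ) = 1 / 2 + 1 by norm_num, Gamma_add_one (by norm_num),
    Gamma_one_half_eq, rpow_add_one (by positivity), ← sqrt_eq_rpow, sqrt_div zero_le_one, sqrt_one]
  ring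

lemma rpow_one_half_sub_one {u : ℝ} (hu : 0 ≤ u) : u ^ ((1 / 2 : ℝ) - 1) = (√u)⁻¹ := by
  rw [show (1 / 2 : ℝ) - 1 = -(1 / 2) by norm_num, rpow_neg hu, sqrt_eq_rpow]

lemma integrableOn_inv_sqrt_mul_exp_mul_one_add {z : ℝ} (hz : 0 < z) (c : ℝ) :
    IntegrableOn (fun u => (√u)⁻¹ * exp (-(z * u)) * (1 + c * u)) (Ioi 0) := by
  refine (integrableOn_rpow_mul_exp_mul_one_add one_half_pos hz c).congr_fun (fun u hu => ?_)
    measurableSet_Ioi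
  simp only [rpow_one_half_sub_one (mem_Ioi.1 hu).le]

lemma integral_inv_sqrt_mul_exp_mul_one_add {z : ℝ} (hz : 0 < z) (c : ℝ) :
    ∫ u in Ioi (0 : ℝ), (√u)⁻¹ * exp (-(z * u)) * (1 + c * u) =
      √π / √z * (1 + c * (1 / 2) / z) := by
  calc ∫ u in Ioi (0 : ℝ), (√u)⁻¹ * exp (-(z * u)) * (1 + c * u)
      = ∫ u in Ioi (0 : ℝ), u ^ ((1 / 2 : ℝ) - 1) * exp (-(z * u)) * (1 + c * u) :=
        setIntegral_congr_fun measurableSet_Ioi fun u hu => by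
          simp only [rpow_one_half_sub_one (mem_Ioi.1 hu).le]
    _ = √π / √z * (1 + c * (1 / 2) / z) := by
        rw [integral_rpow_mul_exp_mul_one_add one_half_pos hz, Gamma_one_half_eq, ← sqrt_eq_rpow,
          sqrt_div zero_le_one, sqrt_one]
        ring

/-! ### `I₁` and `K₁` as Laplace transforms -/

-- Since `√x = 0` for `x ≤ 0`, the integrand is supported on `[0, 2]`, the range of `1 - cos θ`.
lemma besselI1_eq_exp_mul_laplace (z : ℝ) :
    besselI1 z = z / π * exp z * ∫ u in Ioi (0 : ℝ), √(u * (2 - u)) * exp (-(z * u)) := by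
  have hsupport : ∫ u in Ioi (0 : ℝ), √(u * (2 - u)) * exp (-(z * u)) =
      ∫ u in (0 : ℝ)..2, √(u * (2 - u)) * exp (-(z * u)) := by
    rw [intervalIntegral.integral_of_le zero_le_two]
    refine setIntegral_eq_of_subset_of_forall_sdiff_eq_zero measurableSet_Ioi Ioc_subset_Ioi_self
      fun u ⟨hu, hu2⟩ => ?_
    have hu2 : 2 < u := not_le.1 fun h => hu2 ⟨hu, h⟩
    rw [sqrt_eq_zero_of_nonpos (mul_nonpos_of_nonneg_of_nonpos hu.le (by linarith)), zero_mul]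
  have hsubst : ∫ θ in (0 : ℝ)..π,
      √((1 - cos θ) * (2 - (1 - cos θ))) * exp (-(z * (1 - cos θ))) * sin θ =
        ∫ u in (0 : ℝ)..2, √(u * (2 - u)) * exp (-(z * u)) := by
    have h := intervalIntegral.integral_comp_mul_deriv (a := 0) (b := π)
      (f := fun θ => 1 - cos θ) (f' := sin) (g := fun u : ℝ => √(u * (2 - u)) * exp (-(z * u)))
      (fun θ _ => by simpa using (hasDerivAt_cos θ).const_sub 1) (by fun_prop) (by fun_prop)
    rwa [cos_zero, cos_pi, sub_self, show (1 : ℝ) - -1 = 2 by norm_num] at h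
  rw [besselI1_eq_integral, mul_assoc, hsupport, ← hsubst]
  congr 1
  rw [← intervalIntegral.integral_const_mul]
  apply intervalIntegral.integral_congr
  intro θ hθ
  rw [uIcc_of_le pi_pos.le] at hθ
  have hsin : √((1 - cos θ) * (2 - (1 - cos θ))) = sin θ := by
    rw [show (1 - cos θ) * (2 - (1 - cos θ)) = sin θ ^ 2 by rw [sin_sq]; ring,
      sqrt_sq (sin_nonneg_of_mem_Icc hθ)]
  have hexp : exp (z * cos θ) = exp z * exp (-(z * (1 - cos θ))) := by
    rw [← exp_add]
    ring_nf
  simp only [hsin, hexp]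
  ring

lemma image_cosh_sub_one_Ioi : (fun t => cosh t - 1) '' Ioi 0 = Ioi 0 := by
  ext u
  constructor
  · rintro ⟨t, ht, rfl⟩
    exact sub_pos.2 (one_lt_cosh.2 (mem_Ioi.1 ht).ne')
  · intro hu
    have hu : 1 < 1 + u := lt_add_of_pos_right 1 hu
    refine ⟨arcosh (1 + u), arcosh_pos hu, ?_⟩
    simp only [cosh_arcosh hu.le, add_sub_cancel_left]

lemma besselK1_eq_exp_mul_laplace (z : ℝ) :
    besselK1 z =
      exp (-z) * ∫ u in Ioi (0 : ℝ), (1 + u) / √(u * (u + 2)) * exp (-(z * u)) := by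
  have hmono : MonotoneOn (fun t => cosh t - 1) (Ioi 0) := fun s hs t ht hst => by
    have := cosh_strictMonoOn.monotoneOn (mem_Ioi.1 hs).le (mem_Ioi.1 ht).le hst
    simpa
  have hsub := integral_image_eq_integral_deriv_smul_of_monotoneOn measurableSet_Ioi
    (fun t _ => ((hasDerivAt_cosh t).sub_const 1).hasDerivWithinAt) hmono
    (fun u => (1 + u) / √(u * (u + 2)) * exp (-(z * u)))
  rw [image_cosh_sub_one_Ioi] at hsub
  rw [hsub, ← integral_const_mul, besselK1]
  refine setIntegral_congr_fun measurableSet_Ioi fun t ht => ?_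
  have hsinh : 0 < sinh t := sinh_pos_iff.2 ht
  have hsqrt : √((cosh t - 1) * (cosh t - 1 + 2)) = sinh t := by
    rw [show (cosh t - 1) * (cosh t - 1 + 2) = sinh t ^ 2 by rw [sinh_sq]; ring,
      sqrt_sq hsinh.le]
  have hexp : exp (-z * cosh t) = exp (-z) * exp (-(z * (cosh t - 1))) := by
    rw [← exp_add]
    ring_nf
  simp only [smul_eq_mul]
  rw [hsqrt, hexp]
  field_simp
  ring

/-- `I₁` divided by its leading asymptotic term `exp z / √(2πz)` at infinity. -/
noncomputable def scaledI1 (z : ℝ) : ℝ := besselI1 z * exp (-z) * √(2 * π * z)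

/-- `K₁` divided by its leading asymptotic term `√(π / (2z)) exp (-z)` at infinity. -/
noncomputable def scaledK1 (z : ℝ) : ℝ := besselK1 z * exp z * √(2 * z / π)

lemma scaledI1_pos {z : ℝ} (hz : 0 < z) : 0 < scaledI1 z := by
  have := besselI1_pos hz
  unfold scaledI1
  positivity

lemma sqrt_mul_two_sub_le {u : ℝ} (hu : 0 ≤ u) : √(u * (2 - u)) ≤ √2 * √u := by
  rw [← sqrt_mul zero_le_two]
  exact sqrt_le_sqrt (by nlinarith)

lemma le_sqrt_mul_two_sub {u : ℝ} (hu : 0 ≤ u) :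
    √2 * √u * (1 + -(1 / 2) * u) ≤ √(u * (2 - u)) := by
  rcases le_total u 2 with hu2 | hu2
  · refine le_sqrt_of_sq_le ?_
    rw [mul_pow, mul_pow, sq_sqrt zero_le_two, sq_sqrt hu]
    nlinarith [mul_nonneg (mul_nonneg hu hu) (sub_nonneg.2 hu2)]
  · exact (mul_nonpos_of_nonneg_of_nonpos (by positivity) (by linarith)).trans (sqrt_nonneg _)

lemma integrableOn_sqrt_mul_two_sub_mul_exp {z : ℝ} (hz : 0 < z) :
    IntegrableOn (fun u => √(u * (2 - u)) * exp (-(z * u))) (Ioi 0) := by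
  refine ((integrableOn_sqrt_mul_exp_mul_one_add hz 0).const_mul √2).mono'
    (by fun_prop : Continuous _).aestronglyMeasurable
    (ae_restrict_of_forall_mem measurableSet_Ioi fun u hu => ?_)
  have hu : 0 < u := hu
  rw [Real.norm_of_nonneg (by positivity), zero_mul, add_zero, mul_one, ← mul_assoc]
  gcongr
  exact sqrt_mul_two_sub_le hu.le

lemma scaledI1_eq_laplace (z : ℝ) :
    scaledI1 z =
      √(2 * π * z) * (z / π) * ∫ u in Ioi (0 : ℝ), √(u * (2 - u)) * exp (-(z * u)) := by
  have hexp : exp z * exp (-z) = 1 := by rw [← exp_add, add_neg_cancel, exp_zero]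
  rw [scaledI1, besselI1_eq_exp_mul_laplace]
  linear_combination
    √(2 * π * z) * (z / π) * (∫ u in Ioi (0 : ℝ), √(u * (2 - u)) * exp (-(z * u))) * hexp

lemma scaled_integral_sqrt_mul_exp_mul_one_add {z : ℝ} (hz : 0 < z) (c : ℝ) :
    √(2 * π * z) * (z / π) *
      ∫ u in Ioi (0 : ℝ), √2 * (√u * exp (-(z * u)) * (1 + c * u)) = 1 + c * (3 / 2) / z := by
  rw [integral_const_mul, integral_sqrt_mul_exp_mul_one_add hz, sqrt_mul (by positivity),
    sqrt_mul zero_le_two]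
  have h2 : √2 ^ 2 = 2 := sq_sqrt zero_le_two
  have hπ : √π ^ 2 = π := sq_sqrt pi_pos.le
  field_simp
  rw [h2, hπ]
  ring

lemma scaledI1_le_one {z : ℝ} (hz : 0 < z) : scaledI1 z ≤ 1 := by
  calc scaledI1 z
      = √(2 * π * z) * (z / π) * ∫ u in Ioi (0 : ℝ), √(u * (2 - u)) * exp (-(z * u)) :=
        scaledI1_eq_laplace z
    _ ≤ √(2 * π * z) * (z / π) *
          ∫ u in Ioi (0 : ℝ), √2 * (√u * exp (-(z * u)) * (1 + 0 * u)) := by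
        gcongr ?_ * ?_
        refine setIntegral_mono_on (integrableOn_sqrt_mul_two_sub_mul_exp hz)
          ((integrableOn_sqrt_mul_exp_mul_one_add hz 0).const_mul √2) measurableSet_Ioi
          fun u hu => ?_
        have hu : 0 < u := hu
        rw [zero_mul, add_zero, mul_one, ← mul_assoc]
        gcongr
        exact sqrt_mul_two_sub_le hu.le
    _ = 1 := by rw [scaled_integral_sqrt_mul_exp_mul_one_add hz, zero_mul, zero_div, add_zero]

lemma one_sub_le_scaledI1 {z : ℝ} (hz : 0 < z) : 1 - 3 / (4 * z) ≤ scaledI1 z := by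
  calc 1 - 3 / (4 * z)
      = √(2 * π * z) * (z / π) *
          ∫ u in Ioi (0 : ℝ), √2 * (√u * exp (-(z * u)) * (1 + -(1 / 2) * u)) := by
        rw [scaled_integral_sqrt_mul_exp_mul_one_add hz]
        field_simp
        ring
    _ ≤ √(2 * π * z) * (z / π) * ∫ u in Ioi (0 : ℝ), √(u * (2 - u)) * exp (-(z * u)) := by
        gcongr ?_ * ?_
        refine setIntegral_mono_on ((integrableOn_sqrt_mul_exp_mul_one_add hz _).const_mul √2)
          (integrableOn_sqrt_mul_two_sub_mul_exp hz) measurableSet_Ioi fun u hu => ?_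
        calc √2 * (√u * exp (-(z * u)) * (1 + -(1 / 2) * u))
            = √2 * √u * (1 + -(1 / 2) * u) * exp (-(z * u)) := by ring
          _ ≤ √(u * (2 - u)) * exp (-(z * u)) := by
            gcongr
            exact le_sqrt_mul_two_sub (mem_Ioi.1 hu).le
    _ = scaledI1 z := (scaledI1_eq_laplace z).symm

lemma inv_sqrt_two_mul_le {u : ℝ} (hu : 0 < u) :
    (√2)⁻¹ * (√u)⁻¹ ≤ (1 + u) / √(u * (u + 2)) := by
  rw [← mul_inv, ← sqrt_mul zero_le_two, inv_eq_one_div,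
    div_le_div_iff₀ (by positivity) (by positivity), one_mul]
  refine sqrt_le_iff.2 ⟨by positivity, ?_⟩
  rw [mul_pow, sq_sqrt (by positivity)]
  nlinarith [pow_pos hu 2, pow_pos hu 3]

lemma div_sqrt_mul_add_two_le {u : ℝ} (hu : 0 < u) :
    (1 + u) / √(u * (u + 2)) ≤ (√2)⁻¹ * (√u)⁻¹ * (1 + 1 * u) := by
  rw [← mul_inv, ← sqrt_mul zero_le_two, one_mul, inv_mul_eq_div]
  have : √(2 * u) ≤ √(u * (u + 2)) := sqrt_le_sqrt (by nlinarith)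
  gcongr

lemma integrableOn_div_sqrt_mul_exp {z : ℝ} (hz : 0 < z) :
    IntegrableOn (fun u => (1 + u) / √(u * (u + 2)) * exp (-(z * u))) (Ioi 0) := by
  refine ((integrableOn_inv_sqrt_mul_exp_mul_one_add hz 1).const_mul (√2)⁻¹).mono'
    (by fun_prop : Measurable _).aestronglyMeasurable
    (ae_restrict_of_forall_mem measurableSet_Ioi fun u hu => ?_)
  have hu : 0 < u := hu
  rw [Real.norm_of_nonneg (by positivity)]
  calc (1 + u) / √(u * (u + 2)) * exp (-(z * u))
      ≤ (√2)⁻¹ * (√u)⁻¹ * (1 + 1 * u) * exp (-(z * u)) := by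
        gcongr
        exact div_sqrt_mul_add_two_le hu
    _ = (√2)⁻¹ * ((√u)⁻¹ * exp (-(z * u)) * (1 + 1 * u)) := by ring

lemma scaledK1_eq_laplace (z : ℝ) :
    scaledK1 z =
      √(2 * z / π) * ∫ u in Ioi (0 : ℝ), (1 + u) / √(u * (u + 2)) * exp (-(z * u)) := by
  have hexp : exp (-z) * exp z = 1 := by rw [← exp_add, neg_add_cancel, exp_zero]
  rw [scaledK1, besselK1_eq_exp_mul_laplace]
  linear_combination √(2 * z / π) *
    (∫ u in Ioi (0 : ℝ), (1 + u) / √(u * (u + 2)) * exp (-(z * u))) * hexp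

lemma scaled_integral_inv_sqrt_mul_exp_mul_one_add {z : ℝ} (hz : 0 < z) (c : ℝ) :
    √(2 * z / π) *
      ∫ u in Ioi (0 : ℝ), (√2)⁻¹ * ((√u)⁻¹ * exp (-(z * u)) * (1 + c * u)) =
        1 + c * (1 / 2) / z := by
  rw [integral_const_mul, integral_inv_sqrt_mul_exp_mul_one_add hz, sqrt_div (by positivity),
    sqrt_mul zero_le_two]
  field_simp

lemma one_le_scaledK1 {z : ℝ} (hz : 0 < z) : 1 ≤ scaledK1 z := by
  calc 1 = √(2 * z / π) *
          ∫ u in Ioi (0 : ℝ), (√2)⁻¹ * ((√u)⁻¹ * exp (-(z * u)) * (1 + 0 * u)) := by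
        rw [scaled_integral_inv_sqrt_mul_exp_mul_one_add hz, zero_mul, zero_div, add_zero]
    _ ≤ √(2 * z / π) * ∫ u in Ioi (0 : ℝ), (1 + u) / √(u * (u + 2)) * exp (-(z * u)) := by
        gcongr ?_ * ?_
        refine setIntegral_mono_on ((integrableOn_inv_sqrt_mul_exp_mul_one_add hz 0).const_mul _)
          (integrableOn_div_sqrt_mul_exp hz) measurableSet_Ioi fun u hu => ?_
        rw [zero_mul, add_zero, mul_one, ← mul_assoc]
        gcongr
        exact inv_sqrt_two_mul_le hu
    _ = scaledK1 z := (scaledK1_eq_laplace z).symm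

lemma scaledK1_le_one_add {z : ℝ} (hz : 0 < z) : scaledK1 z ≤ 1 + 1 / (2 * z) := by
  calc scaledK1 z
      = √(2 * z / π) * ∫ u in Ioi (0 : ℝ), (1 + u) / √(u * (u + 2)) * exp (-(z * u)) :=
        scaledK1_eq_laplace z
    _ ≤ √(2 * z / π) *
          ∫ u in Ioi (0 : ℝ), (√2)⁻¹ * ((√u)⁻¹ * exp (-(z * u)) * (1 + 1 * u)) := by
        gcongr ?_ * ?_
        refine setIntegral_mono_on (integrableOn_div_sqrt_mul_exp hz)
          ((integrableOn_inv_sqrt_mul_exp_mul_one_add hz 1).const_mul _) measurableSet_Ioi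
          fun u hu => ?_
        calc (1 + u) / √(u * (u + 2)) * exp (-(z * u))
            ≤ (√2)⁻¹ * (√u)⁻¹ * (1 + 1 * u) * exp (-(z * u)) := by
              gcongr
              exact div_sqrt_mul_add_two_le hu
          _ = (√2)⁻¹ * ((√u)⁻¹ * exp (-(z * u)) * (1 + 1 * u)) := by ring
    _ = 1 + 1 / (2 * z) := by
        rw [scaled_integral_inv_sqrt_mul_exp_mul_one_add hz]
        field_simp

/-! ### Pointwise asymptotics of the integrand of `F` -/

lemma measurable_besselK1 : Measurable besselK1 := by
  refine StronglyMeasurable.measurable ?_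
  exact StronglyMeasurable.integral_prod_right
    (f := fun z t => exp (-z * cosh t) * cosh t) (by fun_prop : Continuous _).stronglyMeasurable

lemma mul_besselK1_mul_besselI1 {a ξ : ℝ} (ha : 0 < a) (hξ : 0 < ξ) :
    ξ * besselK1 (a * ξ) * besselI1 ξ =
      exp (-((a - 1) * ξ)) / (2 * √a) * (scaledK1 (a * ξ) * scaledI1 ξ) := by
  have hsqrt : √(2 * (a * ξ) / π) * √(2 * π * ξ) = 2 * ξ * √a := by
    rw [← sqrt_mul (by positivity),
      show 2 * (a * ξ) / π * (2 * π * ξ) = (2 * ξ) ^ 2 * a by field_simp,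
      sqrt_mul (by positivity), sqrt_sq (by positivity)]
  have hexp : exp (-((a - 1) * ξ)) * exp (a * ξ) * exp (-ξ) = 1 := by
    rw [← exp_add, ← exp_add, exp_eq_one_iff]
    ring
  calc ξ * besselK1 (a * ξ) * besselI1 ξ
      = (exp (-((a - 1) * ξ)) * exp (a * ξ) * exp (-ξ)) * (2 * ξ * √a) *
          (besselK1 (a * ξ) * besselI1 ξ) / (2 * √a) := by
        rw [hexp]
        field_simp
    _ = exp (-((a - 1) * ξ)) / (2 * √a) * (scaledK1 (a * ξ) * scaledI1 ξ) := by
        rw [← hsqrt, scaledK1, scaledI1]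
        ring

lemma log_besselI1 {z : ℝ} (hz : 0 < z) :
    log (besselI1 z) = z - log z / 2 - log (2 * π) / 2 + log (scaledI1 z) := by
  have hI := besselI1_pos hz
  rw [scaledI1, log_mul (mul_pos hI (exp_pos _)).ne' (by positivity),
    log_mul hI.ne' (exp_pos _).ne', log_exp, log_sqrt (by positivity),
    log_mul (by positivity) hz.ne']
  ring

lemma two_sub_two_mul_inv_sqrt_le_log {z : ℝ} (hz : 0 < z) : 2 - 2 * (√z)⁻¹ ≤ log z := by
  have h := one_sub_inv_le_log_of_pos (sqrt_pos.2 hz)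
  rw [log_sqrt hz.le] at h
  linarith

lemma scaledI1_le_two_mul {z : ℝ} (hz : 0 < z) (hz1 : z ≤ 1) : scaledI1 z ≤ 2 * z := by
  have hsqrt : √(2 * π * z) ≤ 4 := by
    refine sqrt_le_iff.2 ⟨by norm_num, ?_⟩
    nlinarith [pi_lt_four, pi_pos]
  calc scaledI1 z ≤ z / 2 * exp z * exp (-z) * 4 := by
        unfold scaledI1
        gcongr
        exact besselI1_le_half_mul_exp hz.le
    _ = 2 * z := by
        rw [mul_assoc (z / 2), ← exp_add, add_neg_cancel, exp_zero]
        ring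

lemma abs_scaledK1_mul_scaledI1_sub_one_le {a ξ : ℝ} (ha : 1 ≤ a) (hξ : 0 < ξ) :
    |scaledK1 (a * ξ) * scaledI1 ξ - 1| ≤ 2 / (1 + ξ) := by
  have hK1 : 1 ≤ scaledK1 (a * ξ) := one_le_scaledK1 (by positivity)
  have hK2 : scaledK1 (a * ξ) ≤ 1 + 1 / (2 * ξ) := by
    refine (scaledK1_le_one_add (by positivity)).trans ?_
    gcongr
    exact le_mul_of_one_le_left hξ.le ha
  have hI0 := scaledI1_pos hξ
  have hI1 := scaledI1_le_one hξ
  have hlower : scaledI1 ξ ≤ scaledK1 (a * ξ) * scaledI1 ξ := le_mul_of_one_le_left hI0.le hK1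
  have hupper : scaledK1 (a * ξ) * scaledI1 ξ ≤ 1 + scaledI1 ξ / (2 * ξ) := by
    calc scaledK1 (a * ξ) * scaledI1 ξ ≤ (1 + 1 / (2 * ξ)) * scaledI1 ξ := by gcongr
      _ = scaledI1 ξ + scaledI1 ξ / (2 * ξ) := by ring
      _ ≤ 1 + scaledI1 ξ / (2 * ξ) := by gcongr
  rcases le_total ξ 1 with hξ1 | hξ1
  · have hone : 1 ≤ 2 / (1 + ξ) := by
      rw [one_le_div (by positivity)]
      linarith
    have hsmall : scaledI1 ξ / (2 * ξ) ≤ 1 :=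
      (div_le_one (by positivity)).2 (scaledI1_le_two_mul hξ hξ1)
    exact abs_le.2 ⟨by linarith, by linarith⟩
  · have hlarge : 3 / (4 * ξ) ≤ 2 / (1 + ξ) := by
      rw [div_le_div_iff₀ (by positivity) (by positivity)]
      linarith
    have hratio : scaledI1 ξ / (2 * ξ) ≤ 3 / (4 * ξ) := by
      rw [div_le_div_iff₀ (by positivity) (by positivity)]
      nlinarith
    have := one_sub_le_scaledI1 hξ
    exact abs_le.2 ⟨by linarith, by linarith⟩

lemma log_half_le_log_besselI1 {z : ℝ} (hz : 0 < z) : log (z / 2) ≤ log (besselI1 z) :=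
  log_le_log (half_pos hz) (half_le_besselI1 hz.le)

lemma abs_log_besselI1_le {ξ : ℝ} (hξ : 0 < ξ) :
    |log (besselI1 ξ)| ≤ 2 * (ξ + (√ξ)⁻¹) := by
  have hlog2 := log_two_lt_d9
  have hinv : 0 < (√ξ)⁻¹ := by positivity
  have hlower := log_half_le_log_besselI1 hξ
  rw [log_div hξ.ne' two_ne_zero] at hlower
  have hupper : log (besselI1 ξ) ≤ log (ξ / 2) + ξ := by
    rw [← log_exp (log (ξ / 2) + ξ), exp_add, exp_log (half_pos hξ)]
    exact log_le_log (besselI1_pos hξ) (besselI1_le_half_mul_exp hξ.le)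
  have hlog := log_le_sub_one_of_pos (half_pos hξ)
  have hlog' := two_sub_two_mul_inv_sqrt_le_log hξ
  exact abs_le.2 ⟨by linarith, by linarith⟩

lemma abs_log_besselI1_sub_le {ξ : ℝ} (hξ : 0 < ξ) :
    |log (besselI1 ξ) - (ξ - log ξ / 2)| ≤ 3 * (1 + (√ξ)⁻¹) := by
  have hinv : 0 < (√ξ)⁻¹ := by positivity
  have hscaled := log_besselI1 hξ
  have hlog2 := log_two_lt_d9
  have hlog2π : 0 ≤ log (2 * π) := log_nonneg (by linarith [pi_gt_three])
  have hupper := log_nonpos (scaledI1_pos hξ).le (scaledI1_le_one hξ)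
  refine abs_le.2 ⟨?_, by linarith⟩
  rcases le_total ξ 1 with hξ1 | hξ1
  · have hlower := log_half_le_log_besselI1 hξ
    rw [log_div hξ.ne' two_ne_zero] at hlower
    have hlog := two_sub_two_mul_inv_sqrt_le_log hξ
    linarith
  · have hlog2π' : log (2 * π) ≤ 3 * log 2 := by
      rw [show 3 * log 2 = log (2 ^ 3) by rw [log_pow]; norm_num]
      exact log_le_log (by positivity) (by linarith [pi_lt_four])
    have hquarter : (2 ^ 2 : ℝ)⁻¹ ≤ scaledI1 ξ := by
      have : 3 / (4 * ξ) ≤ 3 / 4 := by gcongr; linarith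
      linarith [one_sub_le_scaledI1 hξ]
    have hlower := log_le_log (by positivity) hquarter
    rw [log_inv, log_pow] at hlower
    push_cast at hlower
    linarith

lemma abs_scaledK1_mul_scaledI1_mul_log_sub_le {a ξ : ℝ} (ha : 1 ≤ a) (hξ : 0 < ξ) :
    |scaledK1 (a * ξ) * scaledI1 ξ * log (besselI1 ξ) - (ξ - log ξ / 2)| ≤
      7 * (1 + (√ξ)⁻¹) := by
  have hinv : 0 < (√ξ)⁻¹ := by positivity
  set pq := scaledK1 (a * ξ) * scaledI1 ξ
  calc |pq * log (besselI1 ξ) - (ξ - log ξ / 2)|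
      = |(pq - 1) * log (besselI1 ξ) + (log (besselI1 ξ) - (ξ - log ξ / 2))| := by ring_nf
    _ ≤ |pq - 1| * |log (besselI1 ξ)| + |log (besselI1 ξ) - (ξ - log ξ / 2)| := by
        rw [← abs_mul]
        exact abs_add_le _ _
    _ ≤ 2 / (1 + ξ) * (2 * (ξ + (√ξ)⁻¹)) + 3 * (1 + (√ξ)⁻¹) := by
        gcongr
        · exact abs_scaledK1_mul_scaledI1_sub_one_le ha hξ
        · exact abs_log_besselI1_le hξ
        · exact abs_log_besselI1_sub_le hξ
    _ ≤ 2 / (1 + ξ) * (2 * ((1 + ξ) * (1 + (√ξ)⁻¹))) + 3 * (1 + (√ξ)⁻¹) := by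
        gcongr
        nlinarith
    _ = 7 * (1 + (√ξ)⁻¹) := by
        field_simp
        ring

/-- The integrand of `Fint`, with `a` in place of `√(1 + ρ⁻¹)`. -/
noncomputable def besselLogIntegrand (a ξ : ℝ) : ℝ :=
  ξ * besselK1 (a * ξ) * besselI1 ξ * log (besselI1 ξ)

lemma abs_besselLogIntegrand_sub_le {a ξ : ℝ} (ha : 1 ≤ a) (hξ : 0 < ξ) :
    |besselLogIntegrand a ξ - 1 / (2 * √a) * (exp (-((a - 1) * ξ)) * (ξ - log ξ / 2))| ≤
      7 * (exp (-((a - 1) * ξ)) * (1 + (√ξ)⁻¹)) := by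
  have hle : exp (-((a - 1) * ξ)) / (2 * √a) ≤ exp (-((a - 1) * ξ)) :=
    div_le_self (exp_pos _).le (by linarith [one_le_sqrt.2 ha])
  calc |besselLogIntegrand a ξ - 1 / (2 * √a) * (exp (-((a - 1) * ξ)) * (ξ - log ξ / 2))|
      = |exp (-((a - 1) * ξ)) / (2 * √a) *
          (scaledK1 (a * ξ) * scaledI1 ξ * log (besselI1 ξ) - (ξ - log ξ / 2))| := by
        rw [besselLogIntegrand, mul_besselK1_mul_besselI1 (by linarith) hξ]
        ring_nf
    _ = exp (-((a - 1) * ξ)) / (2 * √a) *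
          |scaledK1 (a * ξ) * scaledI1 ξ * log (besselI1 ξ) - (ξ - log ξ / 2)| := by
        rw [abs_mul, abs_of_nonneg (by positivity)]
    _ ≤ exp (-((a - 1) * ξ)) * (7 * (1 + (√ξ)⁻¹)) := by
        gcongr
        exact abs_scaledK1_mul_scaledI1_mul_log_sub_le ha hξ
    _ = 7 * (exp (-((a - 1) * ξ)) * (1 + (√ξ)⁻¹)) := by ring

/-! ### Integration of the asymptotics -/

lemma integral_exp_neg_mul_log_eq_neg_eulerMascheroniConstant :
    ∫ u in Ioi (0 : ℝ), exp (-u) * log u = -eulerMascheroniConstant := by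
  have hGammaIntegral : Complex.GammaIntegral =ᶠ[nhds 1] Complex.Gamma := by
    filter_upwards [(isOpen_lt continuous_const Complex.continuous_re).mem_nhds
      (by simp : (0 : ℝ) < (1 : ℂ).re)] with s hs using (Complex.Gamma_eq_integral hs).symm
  have hderiv := ((Complex.hasDerivAt_GammaIntegral (by simp)).congr_of_eventuallyEq
    hGammaIntegral.symm).unique Complex.hasDerivAt_Gamma_one
  simp only [sub_self, Complex.cpow_zero, one_mul, ← Complex.ofReal_mul, integral_complex_ofReal,
    ← Complex.ofReal_neg, Complex.ofReal_inj] at hderiv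
  simpa only [mul_comm (exp _)] using hderiv

lemma abs_log_le_inv_sqrt_add {z : ℝ} (hz : 0 < z) : |log z| ≤ 2 * (√z)⁻¹ + z := by
  have hinv : 0 < (√z)⁻¹ := by positivity
  have hlower := two_sub_two_mul_inv_sqrt_le_log hz
  have hupper := log_le_sub_one_of_pos hz
  exact abs_le.2 ⟨by linarith, by linarith⟩

section LaplaceTransforms

variable {ε : ℝ}

lemma integrableOn_exp_neg_mul (hε : 0 < ε) :
    IntegrableOn (fun u => exp (-(ε * u))) (Ioi 0) := by
  simpa using integrableOn_rpow_mul_exp_neg_mul one_pos hε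

lemma integral_exp_neg_mul (hε : 0 < ε) : ∫ u in Ioi (0 : ℝ), exp (-(ε * u)) = ε⁻¹ := by
  simpa using integral_rpow_mul_exp_neg_mul_Ioi one_pos hε

lemma integrableOn_exp_neg_mul_mul_self (hε : 0 < ε) :
    IntegrableOn (fun u => exp (-(ε * u)) * u) (Ioi 0) := by
  have h := integrableOn_rpow_mul_exp_neg_mul two_pos hε
  rw [show (2 : ℝ) - 1 = 1 by norm_num] at h
  simpa only [rpow_one, mul_comm] using h

lemma integral_exp_neg_mul_mul_self (hε : 0 < ε) :
    ∫ u in Ioi (0 : ℝ), exp (-(ε * u)) * u = (ε ^ 2)⁻¹ := by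
  have h := integral_rpow_mul_exp_neg_mul_Ioi two_pos hε
  rw [show (2 : ℝ) - 1 = 1 by norm_num, Gamma_two] at h
  simpa [mul_comm] using h

lemma integrableOn_exp_neg_mul_mul_inv_sqrt (hε : 0 < ε) :
    IntegrableOn (fun u => exp (-(ε * u)) * (√u)⁻¹) (Ioi 0) := by
  simpa [mul_comm] using integrableOn_inv_sqrt_mul_exp_mul_one_add hε 0

lemma integral_exp_neg_mul_mul_inv_sqrt (hε : 0 < ε) :
    ∫ u in Ioi (0 : ℝ), exp (-(ε * u)) * (√u)⁻¹ = √π / √ε := by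
  simpa [mul_comm] using integral_inv_sqrt_mul_exp_mul_one_add hε 0

lemma integrableOn_exp_neg_mul_mul_log (hε : 0 < ε) :
    IntegrableOn (fun u => exp (-(ε * u)) * log u) (Ioi 0) := by
  refine (((integrableOn_exp_neg_mul_mul_inv_sqrt hε).const_mul 2).add
    (integrableOn_exp_neg_mul_mul_self hε)).mono' (by fun_prop)
    (ae_restrict_of_forall_mem measurableSet_Ioi fun u hu => ?_)
  rw [norm_mul, norm_eq_abs, norm_eq_abs, abs_exp]
  calc exp (-(ε * u)) * |log u| ≤ exp (-(ε * u)) * (2 * (√u)⁻¹ + u) := by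
        gcongr
        exact abs_log_le_inv_sqrt_add hu
    _ = 2 * (exp (-(ε * u)) * (√u)⁻¹) + exp (-(ε * u)) * u := by ring

lemma integral_exp_neg_mul_mul_log (hε : 0 < ε) :
    ∫ u in Ioi (0 : ℝ), exp (-(ε * u)) * log u =
      -(ε⁻¹ * (log ε + eulerMascheroniConstant)) := by
  have hscale := integral_comp_mul_left_Ioi (fun u => exp (-u) * log u) 0 hε
  rw [mul_zero, integral_exp_neg_mul_log_eq_neg_eulerMascheroniConstant, smul_eq_mul] at hscale
  have hsplit : ∫ u in Ioi (0 : ℝ), exp (-(ε * u)) * log (ε * u) =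
      log ε * ε⁻¹ + ∫ u in Ioi (0 : ℝ), exp (-(ε * u)) * log u := by
    rw [← integral_exp_neg_mul hε, ← integral_const_mul,
      ← integral_add ((integrableOn_exp_neg_mul hε).const_mul _)
        (integrableOn_exp_neg_mul_mul_log hε)]
    refine setIntegral_congr_fun measurableSet_Ioi fun u hu => ?_
    simp only [log_mul hε.ne' (mem_Ioi.1 hu).ne']
    ring
  linarith

lemma integrableOn_exp_neg_mul_mul_sub_half_log (hε : 0 < ε) :
    IntegrableOn (fun u => exp (-(ε * u)) * (u - log u / 2)) (Ioi 0) :=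
  ((integrableOn_exp_neg_mul_mul_self hε).sub
    ((integrableOn_exp_neg_mul_mul_log hε).div_const 2)).congr
      (Eventually.of_forall fun u => by simp only [Pi.sub_apply]; ring)

lemma integral_exp_neg_mul_mul_sub_half_log (hε : 0 < ε) :
    ∫ u in Ioi (0 : ℝ), exp (-(ε * u)) * (u - log u / 2) =
      (ε ^ 2)⁻¹ + ε⁻¹ * (log ε + eulerMascheroniConstant) / 2 := by
  simp_rw [mul_sub, ← mul_div_assoc]
  rw [integral_sub (integrableOn_exp_neg_mul_mul_self hε)
    ((integrableOn_exp_neg_mul_mul_log hε).div_const 2), integral_div,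
    integral_exp_neg_mul_mul_self hε, integral_exp_neg_mul_mul_log hε]
  ring

lemma integrableOn_exp_neg_mul_mul_one_add_inv_sqrt (hε : 0 < ε) :
    IntegrableOn (fun u => exp (-(ε * u)) * (1 + (√u)⁻¹)) (Ioi 0) :=
  ((integrableOn_exp_neg_mul hε).add (integrableOn_exp_neg_mul_mul_inv_sqrt hε)).congr
    (Eventually.of_forall fun u => by simp only [Pi.add_apply]; ring)

lemma integral_exp_neg_mul_mul_one_add_inv_sqrt (hε : 0 < ε) :
    ∫ u in Ioi (0 : ℝ), exp (-(ε * u)) * (1 + (√u)⁻¹) = ε⁻¹ + √π / √ε := by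
  simp_rw [mul_add, mul_one]
  rw [integral_add (integrableOn_exp_neg_mul hε) (integrableOn_exp_neg_mul_mul_inv_sqrt hε),
    integral_exp_neg_mul hε, integral_exp_neg_mul_mul_inv_sqrt hε]

end LaplaceTransforms

section BesselLogIntegrand

variable {a : ℝ}

lemma integrableOn_besselLogIntegrand (ha : 1 < a) :
    IntegrableOn (besselLogIntegrand a) (Ioi 0) := by
  have hε : 0 < a - 1 := sub_pos.2 ha
  have hmain := (integrableOn_exp_neg_mul_mul_sub_half_log hε).const_mul (1 / (2 * √a))
  have hmeas : Measurable (besselLogIntegrand a) := by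
    unfold besselLogIntegrand
    have hI := continuous_besselI1.measurable
    have hK := measurable_besselK1
    fun_prop
  have hdiff : IntegrableOn (fun ξ => besselLogIntegrand a ξ -
      1 / (2 * √a) * (exp (-((a - 1) * ξ)) * (ξ - log ξ / 2))) (Ioi 0) :=
    ((integrableOn_exp_neg_mul_mul_one_add_inv_sqrt hε).const_mul 7).mono'
      (by fun_prop) (ae_restrict_of_forall_mem measurableSet_Ioi fun ξ hξ =>
        abs_besselLogIntegrand_sub_le ha.le hξ)
  exact (hdiff.add hmain).congr (Eventually.of_forall fun ξ => by
    simp only [Pi.add_apply, sub_add_cancel])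

lemma abs_integral_besselLogIntegrand_sub_le (ha : 1 < a) :
    |(∫ ξ in Ioi (0 : ℝ), besselLogIntegrand a ξ) -
        1 / (2 * √a) * (((a - 1) ^ 2)⁻¹ +
          (a - 1)⁻¹ * (log (a - 1) + eulerMascheroniConstant) / 2)| ≤
      7 * ((a - 1)⁻¹ + √π / √(a - 1)) := by
  have hε : 0 < a - 1 := sub_pos.2 ha
  rw [← integral_exp_neg_mul_mul_sub_half_log hε, ← integral_const_mul,
    ← integral_sub (integrableOn_besselLogIntegrand ha)
      ((integrableOn_exp_neg_mul_mul_sub_half_log hε).const_mul _),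
    ← integral_exp_neg_mul_mul_one_add_inv_sqrt hε, ← integral_const_mul,
    ← norm_eq_abs]
  refine norm_integral_le_of_norm_le
    ((integrableOn_exp_neg_mul_mul_one_add_inv_sqrt hε).const_mul 7) ?_
  exact ae_restrict_of_forall_mem measurableSet_Ioi fun ξ hξ =>
    abs_besselLogIntegrand_sub_le ha.le hξ

lemma abs_integral_besselLogIntegrand_sub_le_of_le_two (ha : 1 < a) (ha2 : a ≤ 2) :
    |(∫ ξ in Ioi (0 : ℝ), besselLogIntegrand a ξ) -
        1 / (2 * √a) * (((a - 1) ^ 2)⁻¹ + (a - 1)⁻¹ * log (a - 1) / 2)| ≤ 22 * (a - 1)⁻¹ := by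
  have : 0 < a - 1 := sub_pos.2 ha
  have hmain := abs_integral_besselLogIntegrand_sub_le ha
  have hsqrtπ : √π ≤ 2 := sqrt_le_iff.2 ⟨zero_le_two, by linarith [pi_lt_four]⟩
  have hsqrt : √π / √(a - 1) ≤ 2 * (a - 1)⁻¹ := by
    rw [div_eq_mul_inv]
    gcongr
    exact le_sqrt_of_sq_le (by nlinarith)
  have hγ : |1 / (2 * √a) * ((a - 1)⁻¹ * eulerMascheroniConstant / 2)| ≤ (a - 1)⁻¹ := by
    have hγ0 := one_half_lt_eulerMascheroniConstant
    have hγ1 := eulerMascheroniConstant_lt_two_thirds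
    have hsqrta := one_le_sqrt.2 ha.le
    rw [abs_of_nonneg (by positivity)]
    calc 1 / (2 * √a) * ((a - 1)⁻¹ * eulerMascheroniConstant / 2)
        ≤ 1 * ((a - 1)⁻¹ * 2 / 2) := by
          gcongr
          · rw [div_le_one (by positivity)]
            linarith
          · linarith
      _ = (a - 1)⁻¹ := by ring
  set F := ∫ ξ in Ioi (0 : ℝ), besselLogIntegrand a ξ
  calc |F - 1 / (2 * √a) * (((a - 1) ^ 2)⁻¹ + (a - 1)⁻¹ * log (a - 1) / 2)|
      = |(F - 1 / (2 * √a) * (((a - 1) ^ 2)⁻¹ +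
          (a - 1)⁻¹ * (log (a - 1) + eulerMascheroniConstant) / 2)) +
            1 / (2 * √a) * ((a - 1)⁻¹ * eulerMascheroniConstant / 2)| := by ring_nf
    _ ≤ 7 * ((a - 1)⁻¹ + √π / √(a - 1)) + (a - 1)⁻¹ :=
        (abs_add_le _ _).trans (add_le_add hmain hγ)
    _ ≤ 22 * (a - 1)⁻¹ := by linarith

end BesselLogIntegrand

/-! ### The digamma function on `(0, 1]` -/

lemma differentiableAt_log_Gamma {x : ℝ} (hx : 0 < x) :
    DifferentiableAt ℝ (fun y => log (Gamma y)) x :=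
  (differentiableAt_Gamma fun m => ((neg_nonpos.2 m.cast_nonneg).trans_lt hx).ne').log
    (Gamma_pos_of_pos hx).ne'

lemma digamma_add_one {x : ℝ} (hx : 0 < x) : digamma (x + 1) = digamma x + x⁻¹ := by
  have hfunctional : (fun y => log (Gamma (y + 1))) =ᶠ[nhds x] fun y => log (Gamma y) + log y := by
    filter_upwards [lt_mem_nhds hx] with y hy
    rw [Gamma_add_one hy.ne', log_mul hy.ne' (Gamma_pos_of_pos hy).ne', add_comm]
  rw [digamma, ← deriv_comp_add_const (fun y => log (Gamma y)) 1 x, hfunctional.deriv_eq,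
    deriv_fun_add (differentiableAt_log_Gamma hx) (differentiableAt_log hx.ne'), Real.deriv_log,
    digamma]

lemma monotoneOn_digamma : MonotoneOn digamma (Ioi 0) :=
  convexOn_log_Gamma.monotoneOn_deriv fun _ hx => differentiableAt_log_Gamma hx

lemma abs_digamma_add_inv_sub_digamma_one_le {x : ℝ} (hx : 0 < x) (hx1 : x ≤ 1) :
    |digamma x + x⁻¹ - digamma 1| ≤ 1 := by
  have hone : (1 : ℝ) ∈ Ioi 0 := mem_Ioi.2 one_pos
  have hxone : x + 1 ∈ Ioi 0 := mem_Ioi.2 (by positivity)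
  have htwo : (1 + 1 : ℝ) ∈ Ioi 0 := mem_Ioi.2 (by norm_num)
  have hlower := monotoneOn_digamma hone hxone (by linarith)
  have hupper := monotoneOn_digamma hxone htwo (by linarith)
  rw [digamma_add_one one_pos, inv_one] at hupper
  rw [← digamma_add_one hx]
  exact abs_le.2 ⟨by linarith, by linarith⟩

/-! ### The limit `ρ → ∞` -/

lemma abs_half_mul_sqrt_mul_sub_le {a : ℝ} (ha : 1 < a) (ha2 : a ≤ 2) :
    |(a + 1) * √a / 2 * ((a - 1)⁻¹ + log (a - 1) / 2) - ((a - 1)⁻¹ + log (a - 1) / 2)| ≤ 2 := by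
  have hε : 0 < a - 1 := sub_pos.2 ha
  have hlog_nonpos : log (a - 1) ≤ 0 := log_nonpos hε.le (by linarith)
  have hlog := one_sub_inv_le_log_of_pos hε
  have hfactor_lower : 0 ≤ (a + 1) * √a / 2 - 1 := by
    nlinarith [one_le_sqrt.2 ha.le]
  have hfactor_upper : (a + 1) * √a / 2 - 1 ≤ 2 * (a - 1) := by
    have : √a ≤ (a + 1) / 2 := sqrt_le_iff.2 ⟨by linarith, by nlinarith [sq_nonneg (a - 1)]⟩
    nlinarith
  have hsum_nonneg : 0 ≤ (a - 1)⁻¹ + log (a - 1) / 2 := by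
    linarith [(one_le_inv₀ hε).2 (by linarith)]
  rw [← sub_one_mul, abs_of_nonneg (mul_nonneg hfactor_lower hsum_nonneg)]
  calc ((a + 1) * √a / 2 - 1) * ((a - 1)⁻¹ + log (a - 1) / 2) ≤ 2 * (a - 1) * (a - 1)⁻¹ :=
        mul_le_mul hfactor_upper (by linarith) hsum_nonneg (by linarith)
    _ = 2 := by field_simp

section LargeSNR

variable {ρ : ℝ}

lemma sqrt_one_add_inv_mem_Ioc (hρ : 1 ≤ ρ) : √(1 + ρ⁻¹) ∈ Ioc 1 2 := by
  have hpos : 0 < ρ⁻¹ := by positivity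
  have hle : ρ⁻¹ ≤ 1 := inv_le_one_of_one_le₀ hρ
  exact ⟨lt_sqrt_of_sq_lt (by linarith), sqrt_le_iff.2 ⟨zero_le_two, by linarith⟩⟩

lemma sqrt_one_add_inv_sub_one_mul (hρ : 0 < ρ) :
    (√(1 + ρ⁻¹) - 1) * (√(1 + ρ⁻¹) + 1) = ρ⁻¹ := by
  linear_combination sq_sqrt (show 0 ≤ 1 + ρ⁻¹ by positivity)

lemma abs_inv_add_half_log_sub_le (hρ : 1 ≤ ρ) :
    |(√(1 + ρ⁻¹) - 1)⁻¹ + log (√(1 + ρ⁻¹) - 1) / 2 - (2 * ρ - log ρ / 2)| ≤ 1 := by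
  obtain ⟨ha, ha2⟩ := sqrt_one_add_inv_mem_Ioc hρ
  have hprod := sqrt_one_add_inv_sub_one_mul (one_pos.trans_le hρ)
  set a := √(1 + ρ⁻¹)
  have hε : 0 < a - 1 := sub_pos.2 ha
  have hinv : (a - 1)⁻¹ = 2 * ρ + (a + 1)⁻¹ := by
    rw [← inv_inv ρ, ← hprod]
    field_simp
    ring
  have hlog : log (a - 1) = -log ρ - log (a + 1) := by
    rw [← log_inv, ← hprod, log_mul hε.ne' (by linarith)]
    ring
  have hinv_pos : 0 < (a + 1)⁻¹ := by positivity
  have hinv_le : (a + 1)⁻¹ ≤ 1 := inv_le_one_of_one_le₀ (by linarith)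
  have hlog_nonneg : 0 ≤ log (a + 1) := log_nonneg (by linarith)
  have hlog_le := log_le_sub_one_of_pos (show 0 < a + 1 by linarith)
  rw [hinv, hlog]
  exact abs_le.2 ⟨by linarith, by linarith⟩

lemma abs_inv_mul_sqrt_mul_Fint_sub_le (hρ : 1 ≤ ρ) :
    |ρ⁻¹ * √(1 + ρ⁻¹) * Fint ρ - (2 * ρ - log ρ / 2)| ≤ 135 := by
  obtain ⟨ha, ha2⟩ := sqrt_one_add_inv_mem_Ioc hρ
  have hprod := sqrt_one_add_inv_sub_one_mul (one_pos.trans_le hρ)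
  have hF : |Fint ρ - _| ≤ _ := abs_integral_besselLogIntegrand_sub_le_of_le_two ha ha2
  have hfactor := abs_half_mul_sqrt_mul_sub_le ha ha2
  have hmain := abs_inv_add_half_log_sub_le hρ
  set a := √(1 + ρ⁻¹)
  set M := 1 / (2 * √a) * (((a - 1) ^ 2)⁻¹ + (a - 1)⁻¹ * log (a - 1) / 2)
  have : 0 < a - 1 := sub_pos.2 ha
  have hF' : |ρ⁻¹ * a * Fint ρ - ρ⁻¹ * a * M| ≤ 132 := by
    rw [← mul_sub, abs_mul, abs_of_nonneg (by positivity), ← hprod]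
    calc (a - 1) * (a + 1) * a * |Fint ρ - M| ≤ (a - 1) * (2 + 1) * 2 * (22 * (a - 1)⁻¹) := by
          gcongr
      _ = 132 := by
          field_simp
          norm_num
  have hM : ρ⁻¹ * a * M = (a + 1) * √a / 2 * ((a - 1)⁻¹ + log (a - 1) / 2) := by
    calc ρ⁻¹ * a * M = (a + 1) * (a / √a) / 2 *
          ((a - 1) * (((a - 1) ^ 2)⁻¹ + (a - 1)⁻¹ * log (a - 1) / 2)) := by
          rw [← hprod]
          ring
      _ = (a + 1) * √a / 2 * ((a - 1)⁻¹ + log (a - 1) / 2) := by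
          rw [div_sqrt]
          field_simp
  rw [hM] at hF'
  refine (abs_le.2 ⟨?_, ?_⟩) <;> linarith [abs_le.1 hF', abs_le.1 hfactor, abs_le.1 hmain]

lemma inv_mul_log_sqrt_one_add_mem_Icc (hρ : 0 < ρ) : ρ⁻¹ * log √(1 + ρ) ∈ Icc 0 1 := by
  have hlog : log √(1 + ρ) ≤ ρ := by
    rw [log_sqrt (by linarith)]
    linarith [log_le_sub_one_of_pos (show 0 < 1 + ρ by linarith)]
  have hlog_nonneg : 0 ≤ log √(1 + ρ) := log_nonneg (one_le_sqrt.2 (by linarith))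
  refine ⟨by positivity, ?_⟩
  rw [inv_mul_le_iff₀ (by linarith), mul_one]
  exact hlog

lemma abs_Ixy_sub_half_log_le (hρ : 1 ≤ ρ) : |Ixy ρ - 1 / 2 * log ρ| ≤ 139 := by
  obtain ⟨ha, ha2⟩ := sqrt_one_add_inv_mem_Ioc hρ
  have hlog_nonneg := log_nonneg ha.le
  have hlog_le := log_le_sub_one_of_pos (one_pos.trans ha)
  obtain ⟨hsmall_nonneg, hsmall_le⟩ := inv_mul_log_sqrt_one_add_mem_Icc (one_pos.trans_le hρ)
  have hF := abs_inv_mul_sqrt_mul_Fint_sub_le hρ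
  have hdigamma := abs_digamma_add_inv_sub_digamma_one_le (by positivity : 0 < ρ⁻¹)
    (inv_le_one_of_one_le₀ hρ)
  rw [inv_inv] at hdigamma
  rw [Ixy, log_mul (by positivity) (by positivity)]
  refine abs_le.2 ⟨?_, ?_⟩ <;> linarith [abs_le.1 hF, abs_le.1 hdigamma]

end LargeSNR

lemma Ixy_sub_half_log_isBigO_one :
    (Ixy - fun ρ => 1 / 2 * log ρ) =O[atTop] fun _ => (1 : ℝ) := by
  refine Asymptotics.IsBigO.of_bound 139 ?_
  filter_upwards [eventually_ge_atTop 1] with ρ hρ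
  simpa using abs_Ixy_sub_half_log_le hρ

/-- Theorem 2: the mutual information is asymptotically equivalent to
(1/2)·log ρ as ρ → ∞, i.e. lim_{ρ→∞} ((1/2) log ρ) / I_XY(ρ) = 1. -/
theorem stmt_6 :
    Tendsto (fun ρ : ℝ => ((1 / 2) * Real.log ρ) / Ixy ρ) atTop (nhds 1) := by
  have hlog : Tendsto (fun ρ : ℝ => 1 / 2 * log ρ) atTop atTop :=
    tendsto_log_atTop.const_mul_atTop one_half_pos
  have hequiv : Asymptotics.IsEquivalent atTop Ixy fun ρ => 1 / 2 * log ρ :=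
    Ixy_sub_half_log_isBigO_one.trans_isLittleO
      (Asymptotics.isLittleO_const_left.2 (Or.inr (tendsto_norm_atTop_atTop.comp hlog)))
  have hne : ∀ᶠ ρ in atTop, Ixy ρ ≠ 0 :=
    (hequiv.symm.tendsto_atTop hlog).eventually_ne_atTop 0
  exact (Asymptotics.isEquivalent_iff_tendsto_one hne).1 hequiv.symm
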